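/- arXiv:2101.00636 — 2 statements merged into one kernel-verified Lean document; each statement's English description precedes it below -/
import Mathlib

section
/- Let T be a computable infinite binary tree and b ∈ ℕ such that for every n the set T_ext^{=n} of extendible nodes of T of length n has at most b elements. Then T has a computable path. -/
/-- A binary tree: a set of binary strings closed under taking prefixes. -/
def IsBinTree (T : Set (List Bool)) : Prop :=
  ∀ σ τ : List Bool, σ <+: τ → τ ∈ T → σ ∈ T

/-- `f : ℕ → Bool` is a path of `T`: every initial segment `[f 0, …, f (n-1)]` is in `T`. -/
def IsPath (T : Set (List Bool)) (f : ℕ → Bool) : Prop :=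
  ∀ n : ℕ, (List.ofFn fun i : Fin n => f i) ∈ T

/-- `σ` is an extendible node of `T`: `σ ∈ T` and `σ` has extensions in `T` of every
greater length. -/
def Extendible (T : Set (List Bool)) (σ : List Bool) : Prop :=
  σ ∈ T ∧ ∀ n : ℕ, ∃ τ ∈ T, σ <+: τ ∧ τ.length = σ.length + n

/-- `T_ext^{=n}`: the set of extendible nodes of `T` of length `n`. -/
def extLevel (T : Set (List Bool)) (n : ℕ) : Set (List Bool) :=
  {σ : List Bool | Extendible T σ ∧ σ.length = n}

/-! The restriction maps between the sets of extendible nodes of two levels are surjective, so the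
cardinality of these sets is nondecreasing in the level. Being bounded, it is eventually constant;
from then on restriction is injective, and an extendible node `σ` of such a level lies on exactly
one path. By König's lemma, the `n`-th bit of this path is the bit shared by all the extensions of
`σ` in `T` of some sufficiently large length, and it can be computed by searching for such a
length. -/

open Filter List

section Computability

open Computable

variable {α β : Type*} [Primcodable α] [Primcodable β]

theorem computablePred_imp {p q : α → Prop} (hp : ComputablePred p) (hq : ComputablePred q) :
    ComputablePred fun a => p a → q a := by
  classical
  refine Computable.computablePred ?_
  exact (Primrec.or.to_comp.comp hp.not.decide hq.decide).of_eq fun a => by simp [imp_iff_not_or]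

theorem computablePred_forall_mem {f : α → List β} {p : α → β → Prop} (hf : Computable f)
    (hp : ComputablePred fun x : α × β => p x.1 x.2) :
    ComputablePred fun a => ∀ b ∈ f a, p a b := by
  classical
  let testAt (a : α) (i : ℕ) : Bool := ((f a)[i]?.map fun b => decide (p a b)).getD true
  have testAt_computable : Computable₂ testAt :=
    option_getD (option_map (list_getElem?.comp (hf.comp fst) snd)
      (hp.decide.comp ((fst.comp fst).pair snd)).to₂) (const true)
  have rec_computable : Computable fun a =>
      Nat.rec (motive := fun _ => Bool) true (fun i acc => acc && testAt a i) (f a).length :=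
    nat_rec (list_length.comp hf) (const true) <| (Primrec.and.to_comp.comp (snd.comp snd)
      (testAt_computable.comp fst (fst.comp snd))).to₂
  have rec_eq (a : α) (n : ℕ) :
      Nat.rec (motive := fun _ => Bool) true (fun i acc => acc && testAt a i) n =
        decide (∀ b ∈ (f a).take n, p a b) := by
    induction n with
    | zero => simp
    | succ n ih =>
      simp only [ih, testAt, take_add_one]
      cases (f a)[n]? <;> simp [or_imp, forall_and]
  exact Computable.computablePred <| rec_computable.of_eq fun a => by rw [rec_eq, take_length]

theorem primrec_sections : Primrec (sections : List (List β) → List (List β)) := by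
  have cons_tail : Primrec₂ fun (x : (List (List β) × List β × List (List β)) × List β) (b : β) =>
      b :: x.2 :=
    Primrec.list_cons.comp Primrec.snd (Primrec.snd.comp Primrec.fst)
  have step : Primrec₂ fun (_ : List (List β)) (x : List β × List (List β)) =>
      x.2.flatMap fun s => x.1.map fun b => b :: s :=
    Primrec.list_flatMap (Primrec.snd.comp Primrec.snd)
      (Primrec.list_map (Primrec.fst.comp (Primrec.snd.comp Primrec.fst)) cons_tail)
  refine (Primrec.list_foldr Primrec.id (Primrec.const [[]]) step).of_eq fun L => ?_
  induction L with
  | nil => rfl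
  | cons l L ih => simp_all [sections]

theorem mem_sections_replicate {γ : Type*} {n : ℕ} {l s : List γ} :
    s ∈ (replicate n l).sections ↔ s.length = n ∧ ∀ a ∈ s, a ∈ l := by
  rw [mem_sections]
  induction n generalizing s with
  | zero => cases s <;> simp
  | succ n ih => cases s <;> simp [replicate_succ, ih, and_left_comm]

theorem computablePred_forall_length_eq [Finite β] {f : α → ℕ} {p : α → List β → Prop}
    (hf : Computable f) (hp : ComputablePred fun x : α × List β => p x.1 x.2) :
    ComputablePred fun a => ∀ s : List β, s.length = f a → p a s := by
  have := Fintype.ofFinite β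
  let alphabet : List β := Finset.univ.toList
  have replicate_primrec : Primrec fun n => replicate n alphabet :=
    (Primrec.list_map Primrec.list_range (Primrec.const alphabet).to₂).of_eq fun n => by simp
  have words_computable : Computable fun a => (replicate (f a) alphabet).sections :=
    (primrec_sections.comp replicate_primrec).to_comp.comp hf
  exact (computablePred_forall_mem words_computable hp).of_eq fun a => by
    simp [mem_sections_replicate, alphabet]

theorem exists_computable_choice {r : α → β → Prop}
    (hr : ComputablePred fun x : α × β => r x.1 x.2) (hex : ∀ a, ∃ b, r a b) :
    ∃ f : α → β, Computable f ∧ ∀ a, r a (f a) := by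
  classical
  let candidate (a : α) (n : ℕ) : Option β :=
    (Encodable.decode n).bind fun b => bif decide (r a b) then some b else none
  have guard_computable : Computable₂ fun (x : α × ℕ) (b : β) =>
      bif decide (r x.1 b) then some b else none :=
    (Computable.cond (hr.decide.comp ((fst.comp fst).pair snd)) (option_some.comp snd)
      (const Option.none)).to₂
  have candidate_computable : Computable₂ candidate :=
    (option_bind (Computable.decode.comp snd) guard_computable).to₂
  have search_dom (a : α) : (Nat.rfindOpt (candidate a)).Dom := by
    obtain ⟨b, hb⟩ := hex a
    exact Nat.rfindOpt_dom.2 ⟨Encodable.encode b, b, by simp [candidate, hb]⟩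
  refine ⟨fun a => (Nat.rfindOpt (candidate a)).get (search_dom a), ?_, fun a => ?_⟩
  · exact (Partrec.rfindOpt candidate_computable).of_eq fun a => (Part.some_get _).symm
  · obtain ⟨n, hn⟩ := Nat.rfindOpt_spec (Part.get_mem (search_dom a))
    obtain ⟨b, -, hb⟩ := Option.bind_eq_some_iff.1 hn
    by_cases hab : r a b <;> simp_all

end Computability

section Konig

variable {T : Set (List Bool)} {σ τ : List Bool}

theorem Extendible.exists_extension (hσ : Extendible T σ) {k : ℕ} (hk : σ.length ≤ k) :
    ∃ τ ∈ T, σ <+: τ ∧ τ.length = k := by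
  simpa only [Nat.add_sub_cancel' hk] using hσ.2 (k - σ.length)

theorem extendible_of_frequently (hT : IsBinTree T)
    (h : ∃ᶠ k in atTop, ∃ τ ∈ T, σ <+: τ ∧ τ.length = k) : Extendible T σ := by
  have extension (n : ℕ) : ∃ τ ∈ T, σ <+: τ ∧ τ.length = σ.length + n := by
    obtain ⟨_, hk, τ, hτ, hστ, rfl⟩ := frequently_atTop.1 h (σ.length + n)
    exact ⟨τ.take (σ.length + n), hT _ _ (take_prefix _ _) hτ, prefix_take_iff.2 ⟨hστ, by simp⟩,
      length_take_of_le hk⟩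
  obtain ⟨τ, hτ, hστ, -⟩ := extension 0
  exact ⟨hT _ _ hστ hτ, extension⟩

theorem Extendible.of_prefix (hT : IsBinTree T) (hτ : Extendible T τ) (hστ : σ <+: τ) :
    Extendible T σ := by
  refine extendible_of_frequently hT (Eventually.frequently ?_)
  filter_upwards [eventually_ge_atTop τ.length] with k hk
  obtain ⟨ρ, hρ, hτρ, hlen⟩ := hτ.exists_extension hk
  exact ⟨ρ, hρ, hστ.trans hτρ, hlen⟩

theorem eventually_extendible_take (hT : IsBinTree T) (n : ℕ) :
    ∀ᶠ k in atTop, ∀ τ ∈ T, τ.length = k → Extendible T (τ.take n) := by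
  have dies_out : ∀ᶠ k in atTop, ∀ π ∈ {π : List Bool | π.length = n},
      (∃ τ ∈ T, π <+: τ ∧ τ.length = k) → Extendible T π := by
    refine (eventually_all_finite (finite_length_eq Bool n)).2 fun π _ => ?_
    by_cases hπ : Extendible T π
    · exact .of_forall fun _ _ => hπ
    · exact (not_frequently.1 (mt (extendible_of_frequently hT) hπ)).mono fun _ h h' => (h h').elim
  filter_upwards [dies_out, eventually_ge_atTop n] with k hk hnk τ hτ hlen
  exact hk _ (length_take_of_le (hlen ▸ hnk)) ⟨τ, hτ, take_prefix _ _, hlen⟩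

theorem Extendible.exists_mem_extLevel (hT : IsBinTree T) (hσ : Extendible T σ) {n : ℕ}
    (hn : σ.length ≤ n) : ∃ τ ∈ extLevel T n, σ <+: τ := by
  obtain ⟨k, hk, hnk⟩ := ((eventually_extendible_take hT n).and (eventually_ge_atTop n)).exists
  obtain ⟨τ, hτ, hστ, hlen⟩ := hσ.exists_extension (hn.trans hnk)
  exact ⟨τ.take n, ⟨hk τ hτ hlen, length_take_of_le (hlen ▸ hnk)⟩, prefix_take_iff.2 ⟨hστ, hn⟩⟩

theorem finite_extLevel (T : Set (List Bool)) (n : ℕ) : (extLevel T n).Finite :=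
  (finite_length_eq Bool n).subset fun _ h => h.2

theorem image_take_extLevel (hT : IsBinTree T) {n m : ℕ} (hnm : n ≤ m) :
    take n '' extLevel T m = extLevel T n := by
  refine Set.Subset.antisymm ?_ fun σ hσ => ?_
  · rintro _ ⟨τ, hτ, rfl⟩
    exact ⟨hτ.1.of_prefix hT (take_prefix _ _), length_take_of_le (hτ.2 ▸ hnm)⟩
  · obtain ⟨τ, hτ, hστ⟩ := hσ.1.exists_mem_extLevel hT (hσ.2 ▸ hnm)
    exact ⟨τ, hτ, by rw [prefix_iff_eq_take.1 hστ, hσ.2]⟩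

end Konig

section IsolatedPath

variable {T : Set (List Bool)} {σ ρ : List Bool}

/-- `σ` isolates a path of the tree `T`: it is extendible and has at most one extendible extension
of each length. -/
def Isolates (T : Set (List Bool)) (σ : List Bool) : Prop :=
  Extendible T σ ∧ ∀ n, {τ ∈ extLevel T n | σ <+: τ}.Subsingleton

theorem exists_isolates (hT : IsBinTree T) (hroot : Extendible T [])
    (hbdd : BddAbove (Set.range fun n => (extLevel T n).ncard)) : ∃ σ, Isolates T σ := by
  obtain ⟨n, hn⟩ := Nat.sSup_mem (Set.range_nonempty _) hbdd
  have ncard_le (m : ℕ) : (extLevel T m).ncard ≤ (extLevel T n).ncard :=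
    (le_csSup hbdd ⟨m, rfl⟩).trans_eq hn.symm
  obtain ⟨σ, hσ, -⟩ := hroot.exists_mem_extLevel hT n.zero_le
  refine ⟨σ, hσ.1, fun m τ₁ hτ₁ τ₂ hτ₂ => ?_⟩
  have hnm : n ≤ m := hσ.2 ▸ hτ₁.1.2 ▸ hτ₁.2.length_le
  have take_injOn : Set.InjOn (take n) (extLevel T m) := by
    refine Set.injOn_of_ncard_image_eq ?_ (finite_extLevel T m)
    refine (Set.ncard_image_le (finite_extLevel T m)).antisymm ?_
    rw [image_take_extLevel hT hnm]
    exact ncard_le m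
  have take_eq {τ : List Bool} (hστ : σ <+: τ) : τ.take n = σ := by
    rw [prefix_iff_eq_take.1 hστ, hσ.2]
  exact take_injOn hτ₁.1 hτ₂.1 ((take_eq hτ₁.2).trans (take_eq hτ₂.2).symm)

/-- All extensions of `σ` in `T` by `s` further bits have `n`-th bit `c`. This is the decidable
approximation, at stage `s`, to "every path through `σ` takes the value `c` at `n`". Since `s` is
counted from the length of `σ`, it never holds vacuously when `σ` is extendible. -/
def ForcesBit (T : Set (List Bool)) (σ : List Bool) (n : ℕ) (c : Bool) (s : ℕ) : Prop :=
  ∀ τ : List Bool, τ.length = s → σ ++ τ ∈ T → (σ ++ τ)[n]? = some c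

open Computable in
theorem computablePred_forcesBit (hcomp : ComputablePred (· ∈ T)) (σ : List Bool) :
    ComputablePred fun x : ℕ × Bool × ℕ => ForcesBit T σ x.1 x.2.1 x.2.2 := by
  have append_computable :
      Computable fun y : (ℕ × Bool × ℕ) × List Bool => σ ++ y.2 :=
    list_append.comp (const σ) snd
  have mem_computable : ComputablePred fun y : (ℕ × Bool × ℕ) × List Bool => σ ++ y.2 ∈ T := by
    classical exact (hcomp.decide.comp append_computable).computablePred
  have bit_computable : ComputablePred fun y : (ℕ × Bool × ℕ) × List Bool =>
      (σ ++ y.2)[y.1.1]? = some y.1.2.1 :=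
    (Primrec.eq.decide.to_comp.comp
      (list_getElem?.comp append_computable (fst.comp fst))
      (option_some.comp (fst.comp (snd.comp fst)))).computablePred
  exact computablePred_forall_length_eq (snd.comp snd)
    (computablePred_imp mem_computable bit_computable)

theorem Isolates.exists_forcesBit (hT : IsBinTree T) (hσ : Isolates T σ) (n : ℕ) :
    ∃ c s, ForcesBit T σ n c s := by
  let m := max σ.length (n + 1)
  have hnm : n < m := n.lt_succ_self.trans_le (le_max_right _ _)
  obtain ⟨ρ, hρ, hσρ⟩ := hσ.1.exists_mem_extLevel hT (le_max_left σ.length (n + 1))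
  obtain ⟨k, hk, hmk⟩ := ((eventually_extendible_take hT m).and (eventually_ge_atTop m)).exists
  have hnρ : n < ρ.length := hρ.2 ▸ hnm
  refine ⟨ρ[n], k - σ.length, fun τ hτ hmem => ?_⟩
  have hlen : (σ ++ τ).length = k := by
    rw [length_append, hτ, Nat.add_sub_cancel' ((le_max_left _ _).trans hmk)]
  have take_eq : (σ ++ τ).take m = ρ :=
    hσ.2 m ⟨⟨hk _ hmem hlen, length_take_of_le (hlen ▸ hmk)⟩,
      prefix_take_iff.2 ⟨prefix_append _ _, le_max_left _ _⟩⟩ ⟨hρ, hσρ⟩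
  rw [← getElem?_take_of_lt hnm, take_eq, getElem?_eq_getElem hnρ]

theorem ForcesBit.getElem?_eq_some {n s : ℕ} {c : Bool} (h : ForcesBit T σ n c s)
    (hT : IsBinTree T) (hρ : Extendible T ρ) (hσρ : σ <+: ρ) (hn : n < ρ.length) :
    ρ[n]? = some c := by
  obtain ⟨τ, hτ, hρτ, hlen⟩ := hρ.2 s
  obtain ⟨υ, rfl⟩ := hσρ.trans hρτ
  have hυ : s ≤ υ.length := by
    have := hσρ.length_le
    rw [length_append] at hlen
    omega
  have hpre : σ ++ υ.take s <+: σ ++ υ := (prefix_append_right_inj σ).2 (take_prefix s υ)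
  have hbit : (σ ++ υ.take s)[n]? = some c := h _ (length_take_of_le hυ) (hT _ _ hpre hτ)
  have hn' : n < (σ ++ υ.take s).length := (List.getElem?_eq_some_iff.1 hbit).1
  calc ρ[n]? = (σ ++ υ)[n]? := by rw [prefix_iff_getElem?.1 hρτ n hn, getElem?_eq_getElem hn]
    _ = some c := by rw [prefix_iff_getElem?.1 hpre n hn', ← getElem?_eq_getElem hn', hbit]

theorem isPath_of_forcesBit (hT : IsBinTree T) (hσ : Extendible T σ) {f : ℕ → Bool}
    (hf : ∀ n, ∃ s, ForcesBit T σ n (f n) s) : IsPath T f := by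
  intro n
  obtain ⟨ρ, hρ, hσρ⟩ := hσ.exists_mem_extLevel hT (le_max_left σ.length n)
  refine hT _ ρ (prefix_iff_getElem?.2 fun i hi => ?_) hρ.1.1
  obtain ⟨s, hs⟩ := hf i
  rw [length_ofFn] at hi
  rw [List.getElem_ofFn, hs.getElem?_eq_some hT hρ.1 hσρ (hρ.2 ▸ lt_max_of_lt_right hi)]

theorem Isolates.exists_computable_isPath (hT : IsBinTree T) (hcomp : ComputablePred (· ∈ T))
    (hσ : Isolates T σ) : ∃ f : ℕ → Bool, Computable f ∧ IsPath T f := by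
  have bit_exists (n : ℕ) : ∃ x : Bool × ℕ, ForcesBit T σ n x.1 x.2 := by
    simpa only [Prod.exists] using hσ.exists_forcesBit hT n
  obtain ⟨g, hg, hforces⟩ := exists_computable_choice (computablePred_forcesBit hcomp σ) bit_exists
  exact ⟨fun n => (g n).1, Computable.fst.comp hg,
    isPath_of_forcesBit hT hσ.1 fun n => ⟨(g n).2, hforces n⟩⟩

end IsolatedPath

/-- A computable infinite binary tree whose sets of extendible nodes of each length have
at most `b` elements has a computable path. -/
theorem stmt6 (T : Set (List Bool)) (hT : IsBinTree T) (hcomp : ComputablePred (· ∈ T))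
    (hinf : ∀ n : ℕ, ∃ σ ∈ T, σ.length = n) (b : ℕ)
    (hb : ∀ n : ℕ, ∀ F : Finset (List Bool), ↑F ⊆ extLevel T n → F.card ≤ b) :
    ∃ f : ℕ → Bool, Computable f ∧ IsPath T f := by
  have hroot : Extendible T [] := extendible_of_frequently hT <| .of_forall fun n => by
    obtain ⟨σ, hσ, hlen⟩ := hinf n
    exact ⟨σ, hσ, nil_prefix, hlen⟩
  have hbdd : BddAbove (Set.range fun n => (extLevel T n).ncard) := by
    refine ⟨b, ?_⟩
    rintro _ ⟨n, rfl⟩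
    change (extLevel T n).ncard ≤ b
    rw [Set.ncard_eq_toFinset_card _ (finite_extLevel T n)]
    exact hb n _ (Set.Finite.coe_toFinset _).subset
  obtain ⟨σ, hσ⟩ := exists_isolates hT hroot hbdd
  exact hσ.exists_computable_isPath hT hcomp
end

section
/- Let T be a computable infinite binary tree and c ∈ ℕ such that for every n the set T_ext^{=n} of extendible nodes of T of length n has at most c elements. Then there exists a computable infinite tree T' of strings over {0,1,2} such that for every n the set of elements of T' of length n has at most c elements, and such that for every path g of T': the set {s ∈ ℕ : g(s) ≠ 2} is infinite, and the function f : ℕ → Bool listing the values of g at the positions s with g(s) ≠ 2, in increasing order of s, is a path of T. -/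
/-- A tree of strings over ℕ: a set of finite sequences of naturals closed under prefixes. -/
def IsTreeN (T : Set (List ℕ)) : Prop :=
  ∀ σ τ : List ℕ, σ <+: τ → τ ∈ T → σ ∈ T

/-- `f : ℕ → ℕ` is a path of `T`: every initial segment `[f 0, …, f (n-1)]` is in `T`. -/
def IsPathN (T : Set (List ℕ)) (f : ℕ → ℕ) : Prop :=
  ∀ n : ℕ, (List.ofFn fun i : Fin n => f i) ∈ T

/-- A set of strings over ℕ is prefix-free if no element is a proper prefix of another. -/
def PrefixFreeN (P : Set (List ℕ)) : Prop :=
  ∀ σ ∈ P, ∀ τ ∈ P, σ <+: τ → σ = τ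

/-!
By compactness, for every `n` there is a height `h` such that every node of length `n` with an
extension in `T` of length `h` is extendible; hence at most `c` nodes of length `n` reach height
`h`, and such an `h` can be found by search. Passing to running maxima gives a computable monotone
`H` with `n ≤ H n`. The nodes `σ` which have an extension in `T` of length `H |σ|` then form a
computable subtree of `T` (monotonicity of `H` is what makes it prefix-closed) with at most `c`
nodes on each level and all extendible nodes of `T`. Read over the digits `0` and `1` it is already
the required `T'`: the digit `2` is never used, so the positions `s` with `g s ≠ 2` are all of `ℕ`.
-/

section Words

/-- The words of length `n` over a finite alphabet, listed without repetition. -/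
noncomputable def words (α : Type*) [Fintype α] : ℕ → List (List α)
  | 0 => [[]]
  | n + 1 => (words α n).flatMap fun σ => Finset.univ.toList.map (· :: σ)

variable {α : Type*} [Fintype α]

theorem mem_words_iff {n : ℕ} {σ : List α} : σ ∈ words α n ↔ σ.length = n := by
  induction n generalizing σ with
  | zero => simp [words]
  | succ n ih => cases σ <;> simp [words, ih]

theorem nodup_words (n : ℕ) : (words α n).Nodup := by
  induction n with
  | zero => simp [words]
  | succ n ih =>
    refine List.nodup_flatMap.2 ⟨fun σ _ => ?_, ih.imp fun {σ τ} hne => ?_⟩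
    · exact (Finset.nodup_toList _).map fun a b hab => (List.cons.inj hab).1
    · simp only [Function.onFun, List.disjoint_left, List.mem_map]
      rintro _ ⟨a, -, rfl⟩ ⟨b, -, hab⟩
      exact hne (List.cons.inj hab).2.symm

theorem countP_words (p : List α → Prop) [DecidablePred p] (n : ℕ) :
    (words α n).countP p = {σ | p σ ∧ σ.length = n}.ncard := by
  classical
  have hset : {σ | p σ ∧ σ.length = n} = ((words α n).filter p).toFinset := by
    ext σ
    simp [mem_words_iff, and_comm]
  rw [hset, Set.ncard_coe_finset, List.toFinset_card_of_nodup ((nodup_words n).filter _),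
    List.countP_eq_length_filter]

theorem primrec_words [Primcodable α] : Primrec (words α) := by
  have hcons : Primrec₂ fun (σ : List α) (a : α) => a :: σ :=
    Primrec.list_cons.comp Primrec.snd Primrec.fst
  have hstep : Primrec₂ fun (_ : ℕ) (L : List (List α)) =>
      L.flatMap fun σ => Finset.univ.toList.map (· :: σ) :=
    Primrec.list_flatMap Primrec.snd
      (Primrec.list_map (Primrec.const _) (hcons.comp (Primrec.snd.comp .fst) .snd))
  refine (Primrec.nat_rec₁ [[]] hstep).of_eq fun n => ?_
  induction n with
  | zero => rfl
  | succ n ih => simp only [ih, words]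

end Words

section Counting

variable {α β γ : Type*} [Primcodable α] [Primcodable β] [Primcodable γ]

theorem computablePred_comp {p : γ → Prop} {f : β → γ} (hp : ComputablePred p)
    (hf : Computable f) : ComputablePred fun b => p (f b) := by
  classical
  exact (hp.decide.comp hf).computablePred

theorem computablePred_and {p q : β → Prop} (hp : ComputablePred p) (hq : ComputablePred q) :
    ComputablePred fun b => p b ∧ q b := by
  classical
  exact Computable.computablePred <|
    (Primrec.and.to_comp.comp hp.decide hq.decide).of_eq fun b => by simp

theorem computable_countP {l : β → List γ} {p : β → γ → Bool} (hl : Computable l)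
    (hp : Computable₂ p) : Computable fun b => (l b).countP (p b) := by
  let weight (b : β) (i : ℕ) : ℕ :=
    Option.casesOn ((l b)[i]?) 0 fun x => bif p b x then 1 else 0
  have hweight : Computable₂ weight :=
    Computable.option_casesOn (Computable.list_getElem?.comp (hl.comp .fst) .snd) (.const 0)
      (Computable.cond (hp.comp (Computable.fst.comp .fst) .snd) (.const 1) (.const 0)).to₂
  have hstep : Computable₂ fun (b : β) (x : ℕ × ℕ) => x.2 + weight b x.1 :=
    Primrec.nat_add.to_comp.comp (Computable.snd.comp .snd)
      (hweight.comp .fst (Computable.fst.comp .snd))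
  have hrec : ∀ b i, Nat.rec (motive := fun _ => ℕ) 0 (fun i k => k + weight b i) i =
      ((l b).take i).countP (p b) := by
    intro b i
    induction i with
    | zero => rfl
    | succ i ih =>
      rw [List.take_add_one, List.countP_append, ← ih]
      rcases h : (l b)[i]? with _ | x
      · simp [weight, h]
      · cases hx : p b x <;> simp [weight, h, hx]
  exact (Computable.nat_rec (Computable.list_length.comp hl) (.const 0) hstep).of_eq fun b => by
    rw [hrec, List.take_length]

variable [Finite α] {p : β → List α → Prop} {n : β → ℕ}

theorem computable_ncard_length_eq (hp : ComputablePred fun x : β × List α => p x.1 x.2)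
    (hn : Computable n) : Computable fun b => {σ | p b σ ∧ σ.length = n b}.ncard := by
  classical
  have := Fintype.ofFinite α
  have hp' : Computable₂ fun b σ => decide (p b σ) := computablePred_iff_computable_decide.1 hp
  exact (computable_countP (primrec_words.to_comp.comp hn) hp').of_eq fun b => by
    convert countP_words (p b) (n b)

theorem computablePred_exists_length_eq (hp : ComputablePred fun x : β × List α => p x.1 x.2)
    (hn : Computable n) : ComputablePred fun b => ∃ σ, p b σ ∧ σ.length = n b := by
  have hpos : PrimrecPred fun k : ℕ => 0 < k := Primrec.nat_lt.comp (.const 0) .id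
  refine (computablePred_comp hpos.computablePred (computable_ncard_length_eq hp hn)).of_eq
    fun b => ?_
  exact Set.ncard_pos ((List.finite_length_eq α (n b)).subset fun σ hσ => hσ.2)

end Counting

theorem exists_computable_monotone_ge {h : ℕ → ℕ} (hh : Computable h) :
    ∃ H : ℕ → ℕ, Computable H ∧ Monotone H ∧ h ≤ H := by
  have hstep : Computable₂ fun (_ : ℕ) (x : ℕ × ℕ) => max x.2 (h (x.1 + 1)) :=
    Primrec.nat_max.to_comp.comp (Computable.snd.comp .snd)
      (hh.comp (Computable.succ.comp (Computable.fst.comp .snd)))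
  refine ⟨partialSups h, ?_, (partialSups h).monotone, le_partialSups h⟩
  refine (Computable.nat_rec .id (.const (h 0)) hstep).of_eq fun n => ?_
  induction n with
  | zero => simp
  | succ n ih => simpa [partialSups_add_one] using congrArg (max · (h (n + 1))) ih

section Tree

variable {α β : Type*}

/-- A tree of strings over an arbitrary alphabet: `IsBinTree` and `IsTreeN` are its instances over
`Bool` and `ℕ`. -/
def IsPrefixClosed (T : Set (List α)) : Prop :=
  ∀ σ τ : List α, σ <+: τ → τ ∈ T → σ ∈ T

/-- The nodes of `T` of length `n`. -/
def level (T : Set (List α)) (n : ℕ) : Set (List α) :=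
  {σ ∈ T | σ.length = n}

/-- The strings with an extension in `T` of length exactly `h`; they have length at most `h`. -/
def reaching (T : Set (List α)) (h : ℕ) : Set (List α) :=
  {σ | ∃ τ, (τ ∈ T ∧ σ <+: τ) ∧ τ.length = h}

/-- The extendible nodes of `T`: the notion `Extendible` over an arbitrary alphabet. -/
def extendibleNodes (T : Set (List α)) : Set (List α) :=
  {σ | σ ∈ T ∧ ∀ n : ℕ, ∃ τ ∈ T, σ <+: τ ∧ τ.length = σ.length + n}

/-- The nodes `σ` of `T` which survive up to the height `H |σ|` assigned to their level. -/
def survivors (T : Set (List α)) (H : ℕ → ℕ) : Set (List α) :=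
  {σ | σ ∈ reaching T (H σ.length)}

variable {T : Set (List α)} {H : ℕ → ℕ}

theorem finite_level [Finite α] (T : Set (List α)) (n : ℕ) : (level T n).Finite :=
  (List.finite_length_eq α n).subset fun _ hσ => hσ.2

theorem ncard_level_mono [Finite α] {S : Set (List α)} {n : ℕ} (h : level S n ⊆ level T n) :
    (level S n).ncard ≤ (level T n).ncard :=
  Set.ncard_le_ncard h (finite_level T n)

theorem mem_reaching_of_mem_extendibleNodes {σ : List α} (hσ : σ ∈ extendibleNodes T) {h : ℕ}
    (hh : σ.length ≤ h) : σ ∈ reaching T h := by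
  obtain ⟨τ, hτ, hστ, hlen⟩ := hσ.2 (h - σ.length)
  exact ⟨τ, ⟨hτ, hστ⟩, by omega⟩

theorem mem_reaching_of_prefix {h : ℕ} {σ τ : List α} (hστ : σ <+: τ) (hτ : τ ∈ reaching T h) :
    σ ∈ reaching T h := by
  obtain ⟨ρ, ⟨hρ, hτρ⟩, hlen⟩ := hτ
  exact ⟨ρ, ⟨hρ, hστ.trans hτρ⟩, hlen⟩

theorem IsPrefixClosed.reaching_subset (hT : IsPrefixClosed T) (h : ℕ) : reaching T h ⊆ T := by
  rintro σ ⟨τ, ⟨hτ, hστ⟩, -⟩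
  exact hT σ τ hστ hτ

theorem IsPrefixClosed.mem_reaching_of_le (hT : IsPrefixClosed T) {h h' : ℕ} {σ : List α}
    (hσ : σ.length ≤ h) (hh : h ≤ h') (hσ' : σ ∈ reaching T h') : σ ∈ reaching T h := by
  obtain ⟨τ, ⟨hτ, hστ⟩, rfl⟩ := hσ'
  exact ⟨τ.take h, ⟨hT _ τ (τ.take_prefix h) hτ, List.prefix_take_iff.2 ⟨hστ, hσ⟩⟩, by simpa⟩

theorem IsPrefixClosed.eventually_mem_reaching_imp (hT : IsPrefixClosed T) (σ : List α) :
    ∀ᶠ h in Filter.atTop, σ ∈ reaching T h → σ ∈ extendibleNodes T := by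
  by_contra hσ
  rw [Filter.not_eventually] at hσ
  have hreach : ∀ n, σ ∈ reaching T (σ.length + n) := by
    intro n
    obtain ⟨h, hle, hh⟩ := Filter.frequently_atTop.1 hσ (σ.length + n)
    exact hT.mem_reaching_of_le (by omega) hle (Classical.not_imp.1 hh).1
  obtain ⟨_, hh⟩ := hσ.exists
  refine (Classical.not_imp.1 hh).2 ⟨hT.reaching_subset _ (hreach 0), fun n => ?_⟩
  obtain ⟨τ, ⟨hτ, hστ⟩, hlen⟩ := hreach n
  exact ⟨τ, hτ, hστ, hlen⟩

theorem IsPrefixClosed.exists_level_reaching_subset [Finite α] (hT : IsPrefixClosed T) (n : ℕ) :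
    ∃ h ≥ n, level (reaching T h) n ⊆ level (extendibleNodes T) n := by
  have hall := (Filter.eventually_all_finite (List.finite_length_eq α n)).2
    fun σ _ => hT.eventually_mem_reaching_imp σ
  obtain ⟨h, hh, hn⟩ := (hall.and (Filter.eventually_ge_atTop n)).exists
  exact ⟨h, hn, fun σ hσ => ⟨hh σ hσ.2 hσ.1, hσ.2⟩⟩

theorem IsPrefixClosed.level_extendibleNodes_nonempty [Finite α] (hT : IsPrefixClosed T)
    (hinf : ∀ n, (level T n).Nonempty) (n : ℕ) : (level (extendibleNodes T) n).Nonempty := by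
  obtain ⟨h, hn, hsub⟩ := hT.exists_level_reaching_subset n
  obtain ⟨τ, hτ, rfl⟩ := hinf h
  exact ⟨τ.take n, hsub ⟨⟨τ, ⟨hτ, τ.take_prefix n⟩, rfl⟩, by simpa⟩⟩

theorem IsPrefixClosed.survivors_subset (hT : IsPrefixClosed T) (H : ℕ → ℕ) :
    survivors T H ⊆ T :=
  fun σ hσ => hT.reaching_subset (H σ.length) hσ

theorem IsPrefixClosed.isPrefixClosed_survivors (hT : IsPrefixClosed T) (hmono : Monotone H)
    (hle : ∀ n, n ≤ H n) : IsPrefixClosed (survivors T H) := fun σ _ hστ hτ =>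
  hT.mem_reaching_of_le (hle σ.length) (hmono hστ.length_le) (mem_reaching_of_prefix hστ hτ)

theorem extendibleNodes_subset_survivors (hle : ∀ n, n ≤ H n) :
    extendibleNodes T ⊆ survivors T H :=
  fun σ hσ => mem_reaching_of_mem_extendibleNodes hσ (hle σ.length)

theorem level_survivors (T : Set (List α)) (H : ℕ → ℕ) (n : ℕ) :
    level (survivors T H) n = level (reaching T (H n)) n := by
  ext σ
  exact and_congr_left fun hσ => by rw [← hσ]; rfl

section Computability

variable [Primcodable α]

theorem computablePred_mem_reaching [Finite α] (hT : ComputablePred (· ∈ T)) :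
    ComputablePred fun x : List α × ℕ => x.1 ∈ reaching T x.2 := by
  have hprefix : PrimrecPred fun x : List α × List α => x.1 <+: x.2 :=
    (Primrec.eq.comp Primrec.fst
      (Primrec.list_take.comp (Primrec.list_length.comp .fst) .snd)).of_eq
        fun _ => List.prefix_iff_eq_take.symm
  have hmem : ComputablePred fun x : (List α × ℕ) × List α => x.2 ∈ T :=
    computablePred_comp hT .snd
  have hext := computablePred_comp (β := (List α × ℕ) × List α) hprefix.computablePred
    ((Computable.fst.comp .fst).pair .snd)
  exact computablePred_exists_length_eq
    (p := fun (x : List α × ℕ) τ => τ ∈ T ∧ x.1 <+: τ) (computablePred_and hmem hext) .snd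

theorem computablePred_mem_survivors [Finite α] (hT : ComputablePred (· ∈ T))
    (hH : Computable H) : ComputablePred (· ∈ survivors T H) :=
  computablePred_comp (f := fun σ : List α => (σ, H σ.length))
    (computablePred_mem_reaching hT) (Computable.id.pair (hH.comp .list_length))

theorem computable_ncard_level_reaching [Finite α] (hT : ComputablePred (· ∈ T)) :
    Computable fun x : ℕ × ℕ => (level (reaching T x.2) x.1).ncard := by
  have hreach := computablePred_comp (β := (ℕ × ℕ) × List α)
    (computablePred_mem_reaching hT)
    (Computable.snd.pair (Computable.snd.comp .fst))
  exact computable_ncard_length_eq (p := fun (x : ℕ × ℕ) σ => σ ∈ reaching T x.2) hreach .fst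

theorem IsPrefixClosed.exists_computable_height [Finite α] (hT : IsPrefixClosed T)
    (hcomp : ComputablePred (· ∈ T)) {c : ℕ → ℕ} (hc : Computable c)
    (hcard : ∀ n, (level (extendibleNodes T) n).ncard ≤ c n) :
    ∃ H : ℕ → ℕ, Computable H ∧ Monotone H ∧ (∀ n, n ≤ H n) ∧
      ∀ n, (level (reaching T (H n)) n).ncard ≤ c n := by
  classical
  let P (n h : ℕ) : Prop := n ≤ h ∧ (level (reaching T h) n).ncard ≤ c n
  have hP : ComputablePred fun x : ℕ × ℕ => P x.1 x.2 :=
    computablePred_and Primrec.nat_le.computablePred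
      (computablePred_comp Primrec.nat_le.computablePred
        ((computable_ncard_level_reaching hcomp).pair (hc.comp .fst)))
  have hex : ∀ n, ∃ h, P n h := fun n =>
    let ⟨h, hn, hsub⟩ := hT.exists_level_reaching_subset n
    ⟨h, hn, (ncard_level_mono hsub).trans (hcard n)⟩
  obtain ⟨H, hH, hmono, hge⟩ := exists_computable_monotone_ge (Computable.find hP hex)
  have hspec : ∀ n, P n (Nat.find (hex n)) := fun n => Nat.find_spec (hex n)
  refine ⟨H, hH, hmono, fun n => (hspec n).1.trans (hge n), fun n => ?_⟩
  refine (ncard_level_mono fun σ hσ => ⟨?_, hσ.2⟩).trans (hspec n).2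
  exact hT.mem_reaching_of_le (hσ.2.trans_le (hspec n).1) (hge n) hσ.1

theorem IsPrefixClosed.exists_computable_subtree [Finite α] (hT : IsPrefixClosed T)
    (hcomp : ComputablePred (· ∈ T)) {c : ℕ → ℕ} (hc : Computable c)
    (hcard : ∀ n, (level (extendibleNodes T) n).ncard ≤ c n) :
    ∃ S ⊆ T, IsPrefixClosed S ∧ ComputablePred (· ∈ S) ∧ extendibleNodes T ⊆ S ∧
      ∀ n, (level S n).ncard ≤ c n := by
  obtain ⟨H, hH, hmono, hle, hwidth⟩ := hT.exists_computable_height hcomp hc hcard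
  exact ⟨survivors T H, hT.survivors_subset H, hT.isPrefixClosed_survivors hmono hle,
    computablePred_mem_survivors hcomp hH, extendibleNodes_subset_survivors hle,
    fun n => level_survivors T H n ▸ hwidth n⟩

theorem computablePred_mem_image_map [Primcodable β] {f : α → β} {g : β → α} (hf : Primrec f)
    (hg : Primrec g) (hgf : Function.LeftInverse g f) (hT : ComputablePred (· ∈ T)) :
    ComputablePred (· ∈ List.map f '' T) := by
  have hmapf : Primrec (List.map f) := Primrec.list_map .id (hf.comp .snd)
  have hmapg : Primrec (List.map g) := Primrec.list_map .id (hg.comp .snd)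
  have hfix : PrimrecPred fun τ : List β => (τ.map g).map f = τ :=
    Primrec.eq.comp (hmapf.comp hmapg) .id
  refine (computablePred_and (computablePred_comp hT hmapg.to_comp) hfix.computablePred).of_eq
    fun τ => ⟨?_, ?_⟩
  · rintro ⟨hτ, hfix⟩
    exact ⟨τ.map g, hτ, hfix⟩
  · rintro ⟨σ, hσ, rfl⟩
    simpa [hgf.id] using hσ

end Computability

theorem IsPrefixClosed.image_map (hT : IsPrefixClosed T) (f : α → β) :
    IsPrefixClosed (List.map f '' T) := by
  rintro _ _ hστ ⟨τ, hτ, rfl⟩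
  obtain ⟨σ, hσ, rfl⟩ := List.prefix_map_iff.1 hστ
  exact ⟨σ, hT σ τ hσ hτ, rfl⟩

theorem level_image_map (f : α → β) (T : Set (List α)) (n : ℕ) :
    level (List.map f '' T) n = List.map f '' level T n := by
  ext τ
  constructor
  · rintro ⟨⟨σ, hσ, rfl⟩, hn⟩
    exact ⟨σ, ⟨hσ, by simpa using hn⟩, rfl⟩
  · rintro ⟨σ, ⟨hσ, rfl⟩, rfl⟩
    exact ⟨⟨σ, hσ, rfl⟩, by simp⟩

end Tree

section Digits

variable {S : Set (List Bool)}

theorem leftInverse_decide_eq_one_toNat :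
    Function.LeftInverse (fun x : ℕ => decide (x = 1)) Bool.toNat := by
  rintro (_ | _) <;> rfl

theorem lt_two_of_mem_image_map_toNat {τ : List ℕ} (hτ : τ ∈ List.map Bool.toNat '' S) {x : ℕ}
    (hx : x ∈ τ) : x < 2 := by
  obtain ⟨σ, -, rfl⟩ := hτ
  obtain ⟨b, -, rfl⟩ := List.mem_map.1 hx
  exact b.toNat_lt

theorem IsPathN.lt_two {g : ℕ → ℕ} (hg : IsPathN (List.map Bool.toNat '' S) g) (s : ℕ) :
    g s < 2 :=
  lt_two_of_mem_image_map_toNat (hg (s + 1)) (List.mem_ofFn.2 ⟨Fin.last s, rfl⟩)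

theorem IsPathN.isPath_decide_eq_one {g : ℕ → ℕ} (hg : IsPathN (List.map Bool.toNat '' S) g) :
    IsPath S fun n => decide (g n = 1) := by
  intro n
  obtain ⟨σ, hσ, hmap⟩ := hg n
  have hdecode := congrArg (List.map fun x : ℕ => decide (x = 1)) hmap
  rw [List.map_map, leftInverse_decide_eq_one_toNat.id, List.map_id, List.map_ofFn] at hdecode
  exact hdecode ▸ hσ

end Digits

theorem ncard_le_of_forall_finset_card_le {α : Type*} {A : Set α} (hA : A.Finite) {c : ℕ}
    (h : ∀ F : Finset α, ↑F ⊆ A → F.card ≤ c) : A.ncard ≤ c := by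
  rw [Set.ncard_eq_toFinset_card A hA]
  exact h _ hA.coe_toFinset.subset

theorem IsPath.mono {S T : Set (List Bool)} (hST : S ⊆ T) {f : ℕ → Bool} (hf : IsPath S f) :
    IsPath T f :=
  fun n => hST (hf n)

theorem stmt11_general {T : Set (List Bool)} (hT : IsBinTree T) (hcomp : ComputablePred (· ∈ T))
    (hinf : ∀ n : ℕ, ∃ σ ∈ T, σ.length = n) {c : ℕ → ℕ} (hccomp : Computable c)
    (hc : ∀ n : ℕ, ∀ F : Finset (List Bool), ↑F ⊆ extLevel T n → F.card ≤ c n) :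
    ∃ T' : Set (List ℕ), IsTreeN T' ∧ ComputablePred (· ∈ T') ∧
      (∀ τ ∈ T', ∀ x ∈ τ, x < 3) ∧
      (∀ n : ℕ, ∃ τ ∈ T', τ.length = n) ∧
      (∀ n : ℕ, ∀ F : Finset (List ℕ),
        ↑F ⊆ {τ ∈ T' | τ.length = n} → F.card ≤ c n) ∧
      ∀ g : ℕ → ℕ, IsPathN T' g →
        {s : ℕ | g s ≠ 2}.Infinite ∧
        IsPath T (fun n => decide (g (Nat.nth (fun s => g s ≠ 2) n) = 1)) := by
  have hT : IsPrefixClosed T := hT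
  obtain ⟨S, hST, hS, hScomp, hext, hwidth⟩ := hT.exists_computable_subtree hcomp hccomp
    fun n => ncard_le_of_forall_finset_card_le (finite_level (extendibleNodes T) n) (hc n)
  have htoNat : Primrec Bool.toNat := Primrec.dom_finite _
  have hdecide : Primrec fun x : ℕ => decide (x = 1) :=
    (Primrec.eq.comp Primrec.id (Primrec.const 1)).decide
  refine ⟨List.map Bool.toNat '' S, hS.image_map Bool.toNat,
    computablePred_mem_image_map htoNat hdecide leftInverse_decide_eq_one_toNat hScomp,
    fun τ hτ x hx => (lt_two_of_mem_image_map_toNat hτ hx).trans (by decide),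
    fun n => ?_, fun n F hF => ?_, fun g hg => ?_⟩
  · obtain ⟨σ, hσ, hn⟩ := hT.level_extendibleNodes_nonempty hinf n
    exact ⟨σ.map Bool.toNat, ⟨σ, hext hσ, rfl⟩, by simpa using hn⟩
  · have hF : ↑F ⊆ List.map Bool.toNat '' level S n := (level_image_map _ S n).subset.trans' hF
    calc F.card = (↑F : Set (List ℕ)).ncard := (Set.ncard_coe_finset F).symm
      _ ≤ (List.map Bool.toNat '' level S n).ncard :=
        Set.ncard_le_ncard hF ((finite_level S n).image _)
      _ ≤ (level S n).ncard := Set.ncard_image_le (finite_level S n)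
      _ ≤ c n := hwidth n
  · have hne : ∀ s, g s ≠ 2 := fun s => (hg.lt_two s).ne
    simpa [hne, Set.infinite_univ] using hg.isPath_decide_eq_one.mono hST

/-- Reduction of the extendible-node bound to the level bound: from a computable infinite
binary tree `T` with levels of extendible nodes bounded by `c`, one obtains a computable
infinite tree of strings over `{0,1,2}` with levels bounded by `c`, each of whose paths
takes values `≠ 2` infinitely often and, read off at those positions in increasing order,
yields a path of `T`. -/
theorem stmt11 (T : Set (List Bool)) (hT : IsBinTree T) (hcomp : ComputablePred (· ∈ T))
    (hinf : ∀ n : ℕ, ∃ σ ∈ T, σ.length = n) (c : ℕ)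
    (hc : ∀ n : ℕ, ∀ F : Finset (List Bool), ↑F ⊆ extLevel T n → F.card ≤ c) :
    ∃ T' : Set (List ℕ), IsTreeN T' ∧ ComputablePred (· ∈ T') ∧
      (∀ τ ∈ T', ∀ x ∈ τ, x < 3) ∧
      (∀ n : ℕ, ∃ τ ∈ T', τ.length = n) ∧
      (∀ n : ℕ, ∀ F : Finset (List ℕ),
        ↑F ⊆ {τ ∈ T' | τ.length = n} → F.card ≤ c) ∧
      ∀ g : ℕ → ℕ, IsPathN T' g →
        {s : ℕ | g s ≠ 2}.Infinite ∧
        IsPath T (fun n => decide (g (Nat.nth (fun s => g s ≠ 2) n) = 1)) := by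
  exact stmt11_general hT hcomp hinf (.const c) hc
end
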